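/- arXiv:2002.09403 — 6 statements merged into one kernel-verified Lean document; each statement's English description precedes it below -/
import Mathlib

section
/- (Theorem 3.2, convergence of Monotone Inexact Tensor Method I.) Let p ≥ 1 be an integer, L_p > 0, c ≥ 0, and let F : E → ℝ ∪ {+∞} be convex with minimizer x* and minimal value F*. Assume D := sup{‖x − x*‖ : F(x) ≤ F(x_0)} < +∞. Let (x_k)_{k≥0} be a sequence with x_0 ∈ dom F such that for every k ≥ 0: F(x_{k+1}) ≤ F(x_k), and for every y ∈ dom F, F(x_{k+1}) ≤ F(y) + (L_p/p!)‖y − x_k‖^{p+1} + δ_{k+1}, where δ_k = c/k^{p+1}. Then for every k ≥ 1: F(x_k) − F* ≤ (p+1)^{p+1} L_p D^{p+1}/(p!·k^p) + c/k^p. -/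
/-!
Test the step inequality at the point `x k + t • (z - x k)` of the segment towards the comparison
point `z`: by convexity the gap `F (x k) - F z` contracts by the factor `1 - t`, at the price of
`M * (t * D) ^ n` and of the inner accuracy.  Choosing `1 - t = A k / A (k + 1)` makes
`A k * (F (x k) - F z)` telescope.  For the weights `A k = k ^ n`, Bernoulli's inequality gives
`(k + 1) * t ≤ n`, so that every step adds at most `M * (n * D) ^ n` plus the weighted accuracy,
and these increments are constant when the accuracy is `c / k ^ n`.
-/

section Bernoulli

lemma mul_one_sub_div_pow_le {a b : ℝ} (hb : 0 < b) (hab : -b ≤ a) (n : ℕ) :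
    b * (1 - (a / b) ^ n) ≤ n * (b - a) := by
  have hbernoulli : 1 + n * (a / b - 1) ≤ (a / b) ^ n :=
    one_add_mul_sub_le_pow (by rwa [le_div_iff₀ hb, neg_one_mul]) n
  calc b * (1 - (a / b) ^ n) ≤ b * (n * (1 - a / b)) := by
        gcongr
        linarith
    _ = n * (b - a) := by
        field_simp

lemma succ_pow_mul_one_sub_div_mul_pow_le {D : ℝ} (hD : 0 ≤ D) (k n : ℕ) :
    ((k + 1 : ℕ) : ℝ) ^ n * ((1 - (k : ℝ) ^ n / ((k + 1 : ℕ) : ℝ) ^ n) * D) ^ n ≤ (n * D) ^ n := by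
  have hk : (0 : ℝ) < (k + 1 : ℕ) := by positivity
  have hratio : (k : ℝ) / (k + 1 : ℕ) ≤ 1 := (div_le_one hk).2 (by simp)
  have hnonneg : 0 ≤ 1 - ((k : ℝ) / (k + 1 : ℕ)) ^ n :=
    sub_nonneg.2 (pow_le_one₀ (by positivity) hratio)
  have hstepsize : ((k + 1 : ℕ) : ℝ) * (1 - ((k : ℝ) / (k + 1 : ℕ)) ^ n) ≤ n := by
    simpa using mul_one_sub_div_pow_le hk ((neg_nonpos.2 hk.le).trans k.cast_nonneg) n
  rw [← div_pow, ← mul_pow, ← mul_assoc]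
  gcongr

end Bernoulli

section ConvexDescent

variable {E : Type*} [SeminormedAddCommGroup E] [NormedSpace ℝ E] {s : Set E} {F : E → ℝ} {z : E}
  {M D : ℝ} {n : ℕ}

lemma sub_le_one_sub_mul_sub_add_of_convexOn (hF : ConvexOn ℝ s F) {x x' : E} (hx : x ∈ s)
    (hz : z ∈ s) (hM : 0 ≤ M) (hD : ‖x - z‖ ≤ D) {ε : ℝ}
    (hstep : ∀ y ∈ s, F x' ≤ F y + M * ‖y - x‖ ^ n + ε) {t : ℝ} (ht0 : 0 ≤ t) (ht1 : t ≤ 1) :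
    F x' - F z ≤ (1 - t) * (F x - F z) + M * (t * D) ^ n + ε := by
  have hmem : (1 - t) • x + t • z ∈ s := hF.1 hx hz (sub_nonneg.2 ht1) ht0 (by ring)
  have hconv : F ((1 - t) • x + t • z) ≤ (1 - t) * F x + t * F z :=
    hF.2 hx hz (sub_nonneg.2 ht1) ht0 (by ring)
  have hdist : ‖(1 - t) • x + t • z - x‖ ≤ t * D := by
    have hdiff : (1 - t) • x + t • z - x = t • (z - x) := by module
    rw [hdiff, norm_smul, Real.norm_of_nonneg ht0, norm_sub_rev]
    gcongr
  calc F x' - F z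
      ≤ F ((1 - t) • x + t • z) + M * ‖(1 - t) • x + t • z - x‖ ^ n + ε - F z := by
        gcongr
        exact hstep _ hmem
    _ ≤ (1 - t) * F x + t * F z + M * (t * D) ^ n + ε - F z := by gcongr
    _ = (1 - t) * (F x - F z) + M * (t * D) ^ n + ε := by ring

variable {x : ℕ → E} {δ : ℕ → ℝ}

lemma mul_sub_le_add_sum_of_convexOn (hF : ConvexOn ℝ s F) (hx : ∀ k, x k ∈ s) (hz : z ∈ s)
    (hM : 0 ≤ M) (hD : ∀ k, ‖x k - z‖ ≤ D)
    (hstep : ∀ k, ∀ y ∈ s, F (x (k + 1)) ≤ F y + M * ‖y - x k‖ ^ n + δ (k + 1))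
    {A : ℕ → ℝ} (hA : Monotone A) (hA0 : 0 ≤ A 0) (k : ℕ) :
    A k * (F (x k) - F z) ≤ A 0 * (F (x 0) - F z) +
      ∑ i ∈ Finset.range k,
        A (i + 1) * (M * ((1 - A i / A (i + 1)) * D) ^ n + δ (i + 1)) := by
  have hAnonneg (i : ℕ) : 0 ≤ A i := hA0.trans (hA i.zero_le)
  induction k with
  | zero => simp
  | succ k ih =>
    have hle : A k ≤ A (k + 1) := hA k.le_succ
    set t : ℝ := 1 - A k / A (k + 1) with ht
    have ht0 : 0 ≤ t := sub_nonneg.2 (div_le_one_of_le₀ hle (hAnonneg _))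
    have ht1 : t ≤ 1 := sub_le_self _ (div_nonneg (hAnonneg _) (hAnonneg _))
    have hcontract : A (k + 1) * (1 - t) = A k := by
      rw [ht, sub_sub_cancel]
      exact mul_div_cancel_of_imp' fun h => le_antisymm (h ▸ hle) (hAnonneg k)
    rw [Finset.sum_range_succ, ← add_assoc]
    calc A (k + 1) * (F (x (k + 1)) - F z)
        ≤ A (k + 1) * ((1 - t) * (F (x k) - F z) + M * (t * D) ^ n + δ (k + 1)) :=
          mul_le_mul_of_nonneg_left
            (sub_le_one_sub_mul_sub_add_of_convexOn hF (hx k) hz hM (hD k) (hstep k) ht0 ht1)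
            (hAnonneg _)
      _ = A k * (F (x k) - F z) + A (k + 1) * (M * (t * D) ^ n + δ (k + 1)) := by
          rw [← hcontract]
          ring
      _ ≤ _ := add_le_add_left ih _

lemma pow_mul_sub_le_mul_add_sum_of_convexOn (hF : ConvexOn ℝ s F) (hx : ∀ k, x k ∈ s)
    (hz : z ∈ s) (hM : 0 ≤ M) (hD : ∀ k, ‖x k - z‖ ≤ D)
    (hstep : ∀ k, ∀ y ∈ s, F (x (k + 1)) ≤ F y + M * ‖y - x k‖ ^ n + δ (k + 1))
    (hn : n ≠ 0) (k : ℕ) :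
    (k : ℝ) ^ n * (F (x k) - F z) ≤
      k * (M * (n * D) ^ n) + ∑ i ∈ Finset.range k, ((i + 1 : ℕ) : ℝ) ^ n * δ (i + 1) := by
  have hD0 : 0 ≤ D := (norm_nonneg _).trans (hD 0)
  have hweights : Monotone fun i : ℕ => (i : ℝ) ^ n := fun i j hij => by
    dsimp only
    gcongr
  calc (k : ℝ) ^ n * (F (x k) - F z)
      ≤ ∑ i ∈ Finset.range k, ((i + 1 : ℕ) : ℝ) ^ n *
          (M * ((1 - (i : ℝ) ^ n / ((i + 1 : ℕ) : ℝ) ^ n) * D) ^ n + δ (i + 1)) := by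
        simpa [hn] using
          mul_sub_le_add_sum_of_convexOn hF hx hz hM hD hstep hweights (by positivity) k
    _ ≤ ∑ i ∈ Finset.range k, (M * (n * D) ^ n + ((i + 1 : ℕ) : ℝ) ^ n * δ (i + 1)) := by
        refine Finset.sum_le_sum fun i _ => ?_
        rw [mul_add, mul_left_comm]
        gcongr
        exact succ_pow_mul_one_sub_div_mul_pow_le hD0 i n
    _ = k * (M * (n * D) ^ n) + ∑ i ∈ Finset.range k, ((i + 1 : ℕ) : ℝ) ^ n * δ (i + 1) := by
        rw [Finset.sum_add_distrib, Finset.sum_const, Finset.card_range, nsmul_eq_mul]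

lemma pow_mul_sub_le_of_convexOn {p : ℕ} {c : ℝ} (hF : ConvexOn ℝ s F) (hx : ∀ k, x k ∈ s)
    (hz : z ∈ s) (hM : 0 ≤ M) (hD : ∀ k, ‖x k - z‖ ≤ D)
    (hstep : ∀ k, ∀ y ∈ s, F (x (k + 1)) ≤ F y + M * ‖y - x k‖ ^ (p + 1) + δ (k + 1))
    (hδ : ∀ k : ℕ, 1 ≤ k → δ k ≤ c / (k : ℝ) ^ (p + 1)) {k : ℕ} (hk : 1 ≤ k) :
    (k : ℝ) ^ p * (F (x k) - F z) ≤ M * ((p + 1) * D) ^ (p + 1) + c := by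
  have hsum : ∑ i ∈ Finset.range k, ((i + 1 : ℕ) : ℝ) ^ (p + 1) * δ (i + 1) ≤ k * c := by
    rw [← nsmul_eq_mul]
    refine (Finset.sum_le_card_nsmul _ _ c fun i _ => ?_).trans_eq (by rw [Finset.card_range])
    exact (le_div_iff₀' (by positivity)).1 (hδ (i + 1) i.succ_pos)
  have hweighted := pow_mul_sub_le_mul_add_sum_of_convexOn hF hx hz hM hD hstep p.succ_ne_zero k
  push_cast at hweighted hsum
  refine le_of_mul_le_mul_left ?_ (Nat.cast_pos.2 hk : (0 : ℝ) < k)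
  calc (k : ℝ) * (k ^ p * (F (x k) - F z))
      = (k : ℝ) ^ (p + 1) * (F (x k) - F z) := by ring
    _ ≤ k * (M * ((p + 1) * D) ^ (p + 1)) + k * c := hweighted.trans (by gcongr)
    _ = k * (M * ((p + 1) * D) ^ (p + 1) + c) := by ring

end ConvexDescent

theorem monotone_inexact_tensor_method_I_convergence_general
    {E : Type*} [SeminormedAddCommGroup E] [NormedSpace ℝ E]
    (p : ℕ) (L c : ℝ) (hL : 0 ≤ L)
    (domF : Set E) (F : E → ℝ) (hconv : ConvexOn ℝ domF F)
    (z : E) (hz : z ∈ domF)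
    (x : ℕ → E) (hxdom : ∀ k, x k ∈ domF)
    (D : ℝ) (hD : ∀ k, ‖x k - z‖ ≤ D)
    (δ : ℕ → ℝ) (hδ : ∀ k : ℕ, 1 ≤ k → δ k ≤ c / (k : ℝ) ^ (p + 1))
    (hstep : ∀ k : ℕ, ∀ y ∈ domF,
      F (x (k + 1)) ≤ F y + L / (Nat.factorial p : ℝ) * ‖y - x k‖ ^ (p + 1) + δ (k + 1))
    (k : ℕ) (hk : 1 ≤ k) :
    F (x k) - F z ≤
      ((p : ℝ) + 1) ^ (p + 1) * L * D ^ (p + 1) / ((Nat.factorial p : ℝ) * (k : ℝ) ^ p)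
        + c / (k : ℝ) ^ p := by
  calc F (x k) - F z
      ≤ (L / (Nat.factorial p : ℝ) * ((p + 1) * D) ^ (p + 1) + c) / (k : ℝ) ^ p :=
        (le_div_iff₀' (pow_pos (Nat.cast_pos.2 hk) p)).2
          (pow_mul_sub_le_of_convexOn hconv hxdom hz (by positivity) hD hstep hδ hk)
    _ = _ := by
        rw [mul_pow]
        ring

/-- Theorem 3.2: convergence of the Monotone Inexact Tensor Method I with inner
accuracies `δ_k = c / k^{p+1}`.  The extended-valued convex objective `F` is modeled by a
real-valued function on its domain `domF`.  `D` is (an upper bound on) the radius of the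
initial level set `{x : F(x) ≤ F(x_0)}` around the minimizer `x*`. -/
theorem monotone_inexact_tensor_method_I_convergence
    {E : Type*} [NormedAddCommGroup E] [InnerProductSpace ℝ E] [FiniteDimensional ℝ E]
    (p : ℕ) (hp : 1 ≤ p) (L c : ℝ) (hL : 0 < L) (hc : 0 ≤ c)
    (domF : Set E) (F : E → ℝ) (hconv : ConvexOn ℝ domF F)
    (xstar : E) (hxstar : xstar ∈ domF) (hmin : ∀ z ∈ domF, F xstar ≤ F z)
    (x : ℕ → E) (hxdom : ∀ k, x k ∈ domF)
    (D : ℝ) (hD : ∀ z ∈ domF, F z ≤ F (x 0) → ‖z - xstar‖ ≤ D)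
    (δ : ℕ → ℝ) (hδ : ∀ k : ℕ, 1 ≤ k → δ k = c / (k : ℝ) ^ (p + 1))
    (hmono : ∀ k : ℕ, F (x (k + 1)) ≤ F (x k))
    (hstep : ∀ k : ℕ, ∀ y ∈ domF,
      F (x (k + 1)) ≤ F y + L / (Nat.factorial p : ℝ) * ‖y - x k‖ ^ (p + 1) + δ (k + 1)) :
    ∀ k : ℕ, 1 ≤ k →
      F (x k) - F xstar ≤
        ((p : ℝ) + 1) ^ (p + 1) * L * D ^ (p + 1) / ((Nat.factorial p : ℝ) * (k : ℝ) ^ p)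
          + c / (k : ℝ) ^ p :=
  monotone_inexact_tensor_method_I_convergence_general p L c hL.le domF F hconv xstar hxstar x
    hxdom D (fun k => hD _ (hxdom k) (antitone_nat_of_succ_le (f := F ∘ x) hmono k.zero_le)) δ
    (fun k hk => (hδ k hk).le) hstep
end

section
/- (Theorem 3.3, convergence of Monotone Inexact Tensor Method II with adaptive accuracies.) Let p ≥ 1 be an integer, L_p > 0, and let F : E → ℝ ∪ {+∞} be convex with minimizer x* and minimal value F*. Assume D := sup{‖x − x*‖ : F(x) ≤ F(x_0)} < +∞. Fix δ_1 ≥ 0 and 0 ≤ c < 1/((p+2)·3^{p+1} − 1), and set δ_k = c·(F(x_{k−2}) − F(x_{k−1})) for k ≥ 2. Let (x_k)_{k≥0} satisfy for every k ≥ 0: F(x_{k+1}) ≤ F(x_k), and for every y ∈ dom F, F(x_{k+1}) ≤ F(y) + (L_p/p!)‖y − x_k‖^{p+1} + δ_{k+1}. Then for every k ≥ 1: F(x_k) − F* ≤ γ L_p D^{p+1}/(p!·k^p) + β/k^{p+2}, where γ = (p+2)^{p+1}/(1 − c((p+2)3^{p+1} − 1)) and β = (δ_1 + c·2^{p+2}(F(x_0)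 − F*))/(1 − c((p+2)²/(p+1) − 1)). -/
/-!
Comparing one step with the points `(1 - a) x_k + a x*` turns convexity into the recurrence
`f_{k+1} ≤ (1 - a - c) f_k + c f_{k-1} + A a ^ (p + 1)` for the functional gap, with a free weight
`a ∈ [0, 1]` and `A = L D ^ (p + 1) / p!`. Choosing `a` of order `(p + 2) / (k + 1)` so that
`1 / k ^ (p + 2)` solves the homogeneous recurrence exactly, the sequence
`A γ / k ^ p + β / k ^ (p + 2)` satisfies the reverse inequality and hence dominates the gap.
-/

lemma one_add_pow_mul_one_sub_le_one {t : ℝ} (ht : -1 ≤ t) (n : ℕ) :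
    (1 + t) ^ n * (1 - n * t) ≤ 1 := by
  have ht' : 0 ≤ 1 + t := by linarith
  calc (1 + t) ^ n * (1 - n * t) ≤ Real.exp t ^ n * Real.exp (-(n * t)) := by
        refine (mul_le_mul_of_nonneg_left (Real.one_sub_le_exp_neg _) (by positivity)).trans ?_
        gcongr
        linarith [Real.add_one_le_exp t]
    _ = 1 := by rw [← Real.exp_nat_mul, ← Real.exp_add, add_neg_cancel, Real.exp_zero]

lemma pow_succ_sub_one_le_mul_pow {q : ℝ} (hq : 1 ≤ q) (n : ℕ) :
    q ^ (n + 1) - 1 ≤ (n + 1) * (q - 1) * q ^ n := by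
  have h := (le_abs_self _).trans (abs_pow_sub_pow_le q 1 (n + 1))
  rw [one_pow, abs_one, abs_of_nonneg (sub_nonneg.2 hq), abs_of_nonneg (by linarith),
    max_eq_left hq, Nat.add_sub_cancel] at h
  push_cast at h
  linarith

section StepWeight

variable {p : ℕ} {c K : ℝ}

/-- The interpolation weight `a` for which `K ↦ 1 / K ^ (p + 2)` solves the homogeneous recurrence
`g (K + 1) = (1 - a - c) * g K + c * g (K - 1)`. It is meant for `1 < K`. -/
noncomputable def stepWeight (p : ℕ) (c K : ℝ) : ℝ :=
  1 - (K / (K + 1)) ^ (p + 2) + c * ((K / (K - 1)) ^ (p + 2) - 1)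

lemma stepWeight_nonneg (hc : 0 ≤ c) (hK : 1 < K) : 0 ≤ stepWeight p c K := by
  have hr : (K / (K + 1)) ^ (p + 2) ≤ 1 :=
    pow_le_one₀ (by positivity) ((div_le_one (by linarith)).2 (by linarith))
  have hq : 1 ≤ (K / (K - 1)) ^ (p + 2) :=
    one_le_pow₀ ((one_le_div (by linarith)).2 (by linarith))
  exact add_nonneg (sub_nonneg.2 hr) (mul_nonneg hc (sub_nonneg.2 hq))

lemma stepWeight_add_le_one (hc : 0 ≤ c) (hc2 : c * 2 ^ (p + 2) ≤ 1) (hK : 3 ≤ K) :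
    stepWeight p c K + c ≤ 1 := by
  have hqr : K / (K - 1) ≤ 2 * (K / (K + 1)) := by
    rw [← mul_div_assoc, div_le_div_iff₀ (by linarith) (by linarith)]
    nlinarith
  have hq : 0 ≤ K / (K - 1) := div_nonneg (by linarith) (by linarith)
  have hcq : c * (K / (K - 1)) ^ (p + 2) ≤ (K / (K + 1)) ^ (p + 2) := calc
    c * (K / (K - 1)) ^ (p + 2) ≤ c * (2 * (K / (K + 1))) ^ (p + 2) := by gcongr
    _ = c * 2 ^ (p + 2) * (K / (K + 1)) ^ (p + 2) := by rw [mul_pow, mul_assoc]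
    _ ≤ (K / (K + 1)) ^ (p + 2) := mul_le_of_le_one_left (by positivity) hc2
  rw [stepWeight]
  linarith

lemma stepWeight_recurrence (hK : 1 < K) :
    (1 - stepWeight p c K - c) / K ^ (p + 2) + c / (K - 1) ^ (p + 2) = 1 / (K + 1) ^ (p + 2) := by
  have hX : K ^ (p + 2) ≠ 0 := by positivity
  have hY : (K - 1) ^ (p + 2) ≠ 0 := pow_ne_zero _ (by linarith)
  have hZ : (K + 1) ^ (p + 2) ≠ 0 := by positivity
  rw [stepWeight, div_pow, div_pow]
  generalize K ^ (p + 2) = X at hX ⊢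
  generalize (K - 1) ^ (p + 2) = Y at hY ⊢
  generalize (K + 1) ^ (p + 2) = Z at hZ ⊢
  field_simp
  ring

lemma stepWeight_recurrence_le (hc : 0 ≤ c) (hK : 1 < K) :
    (1 - stepWeight p c K - c) / K ^ p + c / (K - 1) ^ p + 1 / (K + 1) ^ (p + 1)
      ≤ 1 / (K + 1) ^ p := by
  set a := stepWeight p c K with ha
  have hK₁ : 0 < K - 1 := by linarith
  calc (1 - a - c) / K ^ p + c / (K - 1) ^ p + 1 / (K + 1) ^ (p + 1)
      = K ^ 2 * ((1 - a - c) / K ^ (p + 2)) + (K - 1) ^ 2 * (c / (K - 1) ^ (p + 2))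
          + (K + 1) * (1 / (K + 1) ^ (p + 2)) := by
        simp only [pow_add]; field_simp
    _ ≤ K ^ 2 * ((1 - a - c) / K ^ (p + 2)) + K ^ 2 * (c / (K - 1) ^ (p + 2))
          + (K + 1) * (1 / (K + 1) ^ (p + 2)) := by
        gcongr; linarith
    _ = (K ^ 2 + (K + 1)) * (1 / (K + 1) ^ (p + 2)) := by
        rw [← mul_add, ha, stepWeight_recurrence hK]; ring
    _ ≤ (K + 1) ^ 2 * (1 / (K + 1) ^ (p + 2)) := by
        gcongr; linarith
    _ = 1 / (K + 1) ^ p := by rw [pow_add]; field_simp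

lemma stepWeight_le (hc : 0 ≤ c) (hK : 3 ≤ K) :
    stepWeight p c K ≤ (p + 2) * (1 + 2 * c * (3 / 2) ^ (p + 1)) / (K + 1) := by
  have hK₁ : 0 < K - 1 := by linarith
  have hr : 1 - (K / (K + 1)) ^ (p + 2) ≤ (p + 2) / (K + 1) := by
    have hbernoulli := one_add_mul_sub_le_pow (a := K / (K + 1))
      (by linarith [show 0 ≤ K / (K + 1) by positivity]) (p + 2)
    have hsub : K / (K + 1) - 1 = -(1 / (K + 1)) := by field_simp; ring
    rw [hsub] at hbernoulli
    push_cast at hbernoulli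
    linarith [show (p + 2 : ℝ) / (K + 1) = (p + 2) * (1 / (K + 1)) by ring]
  have hq : (K / (K - 1)) ^ (p + 2) - 1 ≤ (p + 2) * (2 / (K + 1)) * (3 / 2) ^ (p + 1) := by
    have hq₁ : 1 ≤ K / (K - 1) := (one_le_div hK₁).2 (by linarith)
    have hq₂ : K / (K - 1) ≤ 3 / 2 := (div_le_iff₀ hK₁).2 (by linarith)
    have hsub : K / (K - 1) - 1 ≤ 2 / (K + 1) := by
      rw [div_sub_one hK₁.ne', div_le_div_iff₀ hK₁ (by linarith)]
      linarith
    calc (K / (K - 1)) ^ (p + 2) - 1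
        ≤ ((p + 1 : ℕ) + 1) * (K / (K - 1) - 1) * (K / (K - 1)) ^ (p + 1) :=
          pow_succ_sub_one_le_mul_pow hq₁ (p + 1)
      _ ≤ ((p + 1 : ℕ) + 1) * (2 / (K + 1)) * (3 / 2) ^ (p + 1) := by gcongr
      _ = (p + 2) * (2 / (K + 1)) * (3 / 2) ^ (p + 1) := by push_cast; ring
  calc stepWeight p c K
      ≤ (p + 2) / (K + 1) + c * ((p + 2) * (2 / (K + 1)) * (3 / 2) ^ (p + 1)) := by
        rw [stepWeight]; gcongr
    _ = (p + 2) * (1 + 2 * c * (3 / 2) ^ (p + 1)) / (K + 1) := by ring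

end StepWeight

section Recurrence

variable {p : ℕ} {c A M β : ℝ} {f : ℕ → ℝ}

/-- The recurrence satisfied by the functional gap `f n = F (x n) - F xstar` of the tensor method
with adaptive accuracies; `a` is the weight of the comparison point
`(1 - a) • x (n + 1) + a • xstar`. -/
def GapRecurrence (p : ℕ) (c A : ℝ) (f : ℕ → ℝ) : Prop :=
  ∀ (n : ℕ) (a : ℝ), 0 ≤ a → a ≤ 1 →
    f (n + 2) ≤ (1 - a - c) * f (n + 1) + c * f n + A * a ^ (p + 1)

/-- The two-term bound on the functional gap: the rate `M / K ^ p` of the exact method plus the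
faster decaying contribution of the initial errors. -/
noncomputable def rateEnvelope (p : ℕ) (M β K : ℝ) : ℝ :=
  M / K ^ p + β / K ^ (p + 2)

lemma add_le_rateEnvelope {K u v : ℝ} (hK : 0 < K) (hu : u * K ^ p ≤ M)
    (hv : v * K ^ (p + 2) ≤ β) : u + v ≤ rateEnvelope p M β K :=
  add_le_add ((le_div_iff₀ (by positivity)).2 hu) ((le_div_iff₀ (by positivity)).2 hv)

lemma rateEnvelope_supersolution {K : ℝ} (hc : 0 ≤ c) (hA : 0 ≤ A) (hK : 3 ≤ K)
    (hM : A * ((p + 2) * (1 + 2 * c * (3 / 2) ^ (p + 1))) ^ (p + 1) ≤ M) :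
    (1 - stepWeight p c K - c) * rateEnvelope p M β K + c * rateEnvelope p M β (K - 1)
        + A * stepWeight p c K ^ (p + 1)
      ≤ rateEnvelope p M β (K + 1) := by
  have hK₁ : 1 < K := by linarith
  have ha : 0 ≤ stepWeight p c K := stepWeight_nonneg hc hK₁
  have hM₀ : 0 ≤ M := le_trans (by positivity) hM
  have hpow : A * stepWeight p c K ^ (p + 1) ≤ M * (1 / (K + 1) ^ (p + 1)) := calc
    A * stepWeight p c K ^ (p + 1)
        ≤ A * ((p + 2) * (1 + 2 * c * (3 / 2) ^ (p + 1)) / (K + 1)) ^ (p + 1) := by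
          gcongr; exact stepWeight_le hc hK
    _ = A * ((p + 2) * (1 + 2 * c * (3 / 2) ^ (p + 1))) ^ (p + 1) * (1 / (K + 1) ^ (p + 1)) := by
          rw [div_pow]; ring
    _ ≤ M * (1 / (K + 1) ^ (p + 1)) := by gcongr
  have hlead := mul_le_mul_of_nonneg_left (stepWeight_recurrence_le (p := p) hc hK₁) hM₀
  have herr := congrArg (β * ·) (stepWeight_recurrence (p := p) (c := c) hK₁)
  simp only [rateEnvelope, div_eq_mul_inv, mul_add] at *
  linarith

lemma GapRecurrence.le_add_mul (hf : GapRecurrence p c A f) (hc : 0 ≤ c) {n : ℕ}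
    (hn : 0 ≤ f (n + 1)) : f (n + 2) ≤ A + c * f n := by
  have h := hf n 1 zero_le_one le_rfl
  rw [one_pow] at h
  linarith [mul_nonneg hc hn]

lemma GapRecurrence.le_rateEnvelope (hf : GapRecurrence p c A f) (hc : 0 ≤ c)
    (hc2 : c * 2 ^ (p + 2) ≤ 1) (hA : 0 ≤ A)
    (hM : A * ((p + 2) * (1 + 2 * c * (3 / 2) ^ (p + 1))) ^ (p + 1) ≤ M)
    (h2 : f 2 ≤ rateEnvelope p M β 2) (h3 : f 3 ≤ rateEnvelope p M β 3) (n : ℕ) :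
    f (n + 2) ≤ rateEnvelope p M β (n + 2) := by
  induction n using Nat.twoStepInduction with
  | zero => exact_mod_cast h2
  | one => exact_mod_cast h3
  | more n ih₂ ih₃ =>
    have hK : (3 : ℝ) ≤ n + 3 := by linarith [n.cast_nonneg (α := ℝ)]
    set a := stepWeight p c (n + 3) with ha
    have ha₀ : 0 ≤ a := stepWeight_nonneg hc (by linarith)
    have hac : a + c ≤ 1 := stepWeight_add_le_one hc hc2 hK
    have hac₀ : 0 ≤ 1 - a - c := by linarith
    have hsuper := rateEnvelope_supersolution (β := β) hc hA hK hM
    rw [← ha, show (n : ℝ) + 3 - 1 = n + 2 by ring] at hsuper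
    rw [show ((n + 1 : ℕ) : ℝ) + 2 = n + 3 by push_cast; ring] at ih₃
    calc f (n + 2 + 2) ≤ (1 - a - c) * f (n + 3) + c * f (n + 2) + A * a ^ (p + 1) :=
          hf (n + 2) a ha₀ (by linarith)
      _ ≤ (1 - a - c) * rateEnvelope p M β (n + 3) + c * rateEnvelope p M β (n + 2)
            + A * a ^ (p + 1) := by gcongr
      _ ≤ rateEnvelope p M β (n + 3 + 1) := hsuper
      _ = rateEnvelope p M β ((n + 2 : ℕ) + 2) := by push_cast; ring_nf

end Recurrence

section Constants

variable {p : ℕ} {c d g : ℝ}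

/-- The reciprocal of the upper threshold for the accuracy parameter `c`. -/
noncomputable def invThreshold (p : ℕ) : ℝ :=
  (p + 2) * 3 ^ (p + 1) - 1

/-- The constant `γ` of the leading term of the rate. -/
noncomputable def rateConst (p : ℕ) (c : ℝ) : ℝ :=
  (p + 2) ^ (p + 1) / (1 - c * invThreshold p)

/-- The coefficient of `c` in the denominator of the constant `β`. -/
noncomputable def errorFactor (p : ℕ) : ℝ :=
  (p + 2) ^ 2 / (p + 1) - 1

/-- The constant `β`, through which the first accuracy `d` and the initial gap `g` enter the
rate. -/
noncomputable def errorConst (p : ℕ) (c d g : ℝ) : ℝ :=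
  (d + c * 2 ^ (p + 2) * g) / (1 - c * errorFactor p)

lemma two_pow_le_invThreshold (p : ℕ) : 2 ^ (p + 2) ≤ invThreshold p := by
  have htwo : (1 : ℝ) ≤ 2 ^ p := one_le_pow₀ (by norm_num)
  have hthree : (2 : ℝ) ^ p ≤ 3 ^ p := by gcongr; norm_num
  have hp : (0 : ℝ) ≤ p * 3 ^ p := by positivity
  simp only [invThreshold, pow_succ]
  linarith

lemma invThreshold_pos (p : ℕ) : 0 < invThreshold p :=
  (by positivity : (0 : ℝ) < 2 ^ (p + 2)).trans_le (two_pow_le_invThreshold p)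

lemma mul_two_pow_le_one (hc₀ : 0 ≤ c) (hc : c * invThreshold p < 1) : c * 2 ^ (p + 2) ≤ 1 :=
  (mul_le_mul_of_nonneg_left (two_pow_le_invThreshold p) hc₀).trans hc.le

lemma pow_le_rateConst (hc₀ : 0 ≤ c) (hc : c * invThreshold p < 1) :
    ((p + 2) * (1 + 2 * c * (3 / 2) ^ (p + 1))) ^ (p + 1) ≤ rateConst p c := by
  set t := 2 * c * (3 / 2) ^ (p + 1) with ht
  have ht₀ : 0 ≤ t := by positivity
  have htc : (p + 1 : ℕ) * t ≤ c * invThreshold p := by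
    have htwo : (1 : ℝ) ≤ 2 ^ p := one_le_pow₀ (by norm_num)
    have hthree : (1 : ℝ) ≤ 3 ^ (p + 1) := one_le_pow₀ (by norm_num)
    have hratio : 2 * (3 / 2 : ℝ) ^ (p + 1) ≤ 3 ^ (p + 1) := by
      rw [div_pow, mul_div_assoc', div_le_iff₀ (by positivity), pow_succ 2]
      nlinarith
    calc (p + 1 : ℕ) * t = c * ((p + 1) * (2 * (3 / 2) ^ (p + 1))) := by
          rw [ht]; push_cast; ring
      _ ≤ c * ((p + 1) * 3 ^ (p + 1)) := by gcongr
      _ ≤ c * invThreshold p := by rw [invThreshold]; gcongr; linarith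
  have hexp : (1 + t) ^ (p + 1) * (1 - c * invThreshold p) ≤ 1 := calc
    _ ≤ (1 + t) ^ (p + 1) * (1 - (p + 1 : ℕ) * t) := by gcongr
    _ ≤ 1 := one_add_pow_mul_one_sub_le_one (by linarith) (p + 1)
  rw [rateConst, le_div_iff₀ (by linarith), mul_pow, mul_assoc]
  exact mul_le_of_le_one_right (by positivity) hexp

lemma three_pow_le_rateConst (hp : 1 ≤ p) (hc₀ : 0 ≤ c) (hc : c * invThreshold p < 1) :
    3 ^ (p + 1) ≤ rateConst p c := by
  have hp' : (1 : ℝ) ≤ p := by exact_mod_cast hp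
  have ht : 0 ≤ 2 * c * (3 / 2) ^ (p + 1) := by positivity
  refine le_trans ?_ (pow_le_rateConst hc₀ hc)
  gcongr
  nlinarith

lemma one_le_errorFactor (p : ℕ) : 1 ≤ errorFactor p := by
  rw [errorFactor, le_sub_iff_add_le, le_div_iff₀ (by positivity)]
  nlinarith [p.cast_nonneg (α := ℝ)]

lemma errorFactor_le_invThreshold (p : ℕ) : errorFactor p ≤ invThreshold p := by
  have hthree : (3 : ℝ) ≤ 3 ^ (p + 1) := le_self_pow₀ (by norm_num) p.succ_ne_zero
  refine sub_le_sub_right ?_ 1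
  calc ((p : ℝ) + 2) ^ 2 / (p + 1) ≤ (p + 2) * 3 := by
        rw [div_le_iff₀ (by positivity)]
        nlinarith [p.cast_nonneg (α := ℝ)]
    _ ≤ (p + 2) * 3 ^ (p + 1) := by gcongr

lemma mul_errorFactor_lt_one (hc₀ : 0 ≤ c) (hc : c * invThreshold p < 1) :
    c * errorFactor p < 1 :=
  (mul_le_mul_of_nonneg_left (errorFactor_le_invThreshold p) hc₀).trans_lt hc

lemma mul_three_pow_mul_one_sub_le_one (hp : 1 ≤ p) (hc₀ : 0 ≤ c)
    (hc : c * invThreshold p < 1) : c * 3 ^ (p + 2) * (1 - c * errorFactor p) ≤ 1 := by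
  have hthree : 3 ^ (p + 2) ≤ invThreshold p + errorFactor p := by
    have hp' : (3 : ℝ) ≤ p + 2 := by exact_mod_cast Nat.add_le_add_right hp 2
    have hpow : (3 : ℝ) * 3 ^ (p + 1) ≤ (p + 2) * 3 ^ (p + 1) := by gcongr
    rw [pow_succ' 3 (p + 1), invThreshold]
    linarith [one_le_errorFactor p]
  have hpow : c * 3 ^ (p + 2) ≤ 1 + c * errorFactor p := by
    linarith [mul_le_mul_of_nonneg_left hthree hc₀]
  calc c * 3 ^ (p + 2) * (1 - c * errorFactor p)
      ≤ (1 + c * errorFactor p) * (1 - c * errorFactor p) :=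
        mul_le_mul_of_nonneg_right hpow (sub_pos.2 (mul_errorFactor_lt_one hc₀ hc)).le
    _ = 1 - (c * errorFactor p) ^ 2 := by ring
    _ ≤ 1 := sub_le_self _ (sq_nonneg _)

lemma add_le_errorConst (hc₀ : 0 ≤ c) (hc : c * invThreshold p < 1) (hd : 0 ≤ d) (hg : 0 ≤ g) :
    d + c * 2 ^ (p + 2) * g ≤ errorConst p c d g :=
  le_div_self (by positivity) (sub_pos.2 (mul_errorFactor_lt_one hc₀ hc))
    (sub_le_self _ (mul_nonneg hc₀ (zero_le_one.trans (one_le_errorFactor p))))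

lemma mul_three_pow_mul_le_errorConst (hp : 1 ≤ p) (hc₀ : 0 ≤ c) (hc : c * invThreshold p < 1)
    (hd : 0 ≤ d) (hg : 0 ≤ g) : c * 3 ^ (p + 2) * d ≤ errorConst p c d g := by
  rw [errorConst, le_div_iff₀ (sub_pos.2 (mul_errorFactor_lt_one hc₀ hc)), mul_right_comm]
  calc c * 3 ^ (p + 2) * (1 - c * errorFactor p) * d ≤ d :=
        mul_le_of_le_one_left hd (mul_three_pow_mul_one_sub_le_one hp hc₀ hc)
    _ ≤ d + c * 2 ^ (p + 2) * g := le_add_of_nonneg_right (by positivity)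

end Constants

section InitialGaps

variable {p : ℕ} {c A d M β : ℝ} {f : ℕ → ℝ}

lemma gap_one_le_rateEnvelope (hf₁ : f 1 ≤ A + d) (hM : A ≤ M) (hβ : d ≤ β) :
    f 1 ≤ rateEnvelope p M β 1 :=
  hf₁.trans (add_le_rateEnvelope one_pos (by simpa using hM) (by simpa using hβ))

lemma gap_two_le_rateEnvelope (hf : GapRecurrence p c A f) (hc : 0 ≤ c) (hf₁ : 0 ≤ f 1)
    (hM : A * 2 ^ p ≤ M) (hβ : c * 2 ^ (p + 2) * f 0 ≤ β) : f 2 ≤ rateEnvelope p M β 2 :=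
  (hf.le_add_mul (n := 0) hc hf₁).trans
    (add_le_rateEnvelope two_pos hM (by rwa [mul_right_comm]))

lemma gap_three_le_rateEnvelope (hf : GapRecurrence p c A f) (hc : 0 ≤ c) (hf₂ : 0 ≤ f 2)
    (hf₁ : f 1 ≤ A + d) (hM : (1 + c) * A * 3 ^ p ≤ M) (hβ : c * 3 ^ (p + 2) * d ≤ β) :
    f 3 ≤ rateEnvelope p M β 3 :=
  calc f 3 ≤ A + c * f 1 := hf.le_add_mul (n := 1) hc hf₂
    _ ≤ A + c * (A + d) := by gcongr
    _ = (1 + c) * A + c * d := by ring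
    _ ≤ rateEnvelope p M β 3 := add_le_rateEnvelope three_pos hM (by rwa [mul_right_comm])

end InitialGaps

theorem gap_le_rateEnvelope {p : ℕ} {c A d : ℝ} {f : ℕ → ℝ} (hp : 1 ≤ p) (hc₀ : 0 ≤ c)
    (hc : c * invThreshold p < 1) (hA : 0 ≤ A) (hd : 0 ≤ d) (hf₀ : ∀ n, 0 ≤ f n)
    (hf₁ : f 1 ≤ A + d) (hf : GapRecurrence p c A f) {n : ℕ} (hn : 1 ≤ n) :
    f n ≤ rateEnvelope p (A * rateConst p c) (errorConst p c d (f 0)) n := by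
  have hc2 : c * 2 ^ (p + 2) ≤ 1 := mul_two_pow_le_one hc₀ hc
  have hc₁ : c ≤ 1 := (le_mul_of_one_le_right hc₀ (one_le_pow₀ one_le_two)).trans hc2
  have hM {u : ℝ} (hu : u ≤ 3 ^ (p + 1)) : A * u ≤ A * rateConst p c :=
    mul_le_mul_of_nonneg_left (hu.trans (three_pow_le_rateConst hp hc₀ hc)) hA
  have hM₁ : A ≤ A * rateConst p c := by
    simpa using hM (one_le_pow₀ (by norm_num))
  have hM₂ : A * 2 ^ p ≤ A * rateConst p c :=
    hM ((pow_le_pow_left₀ zero_le_two (by norm_num) p).trans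
      (pow_le_pow_right₀ (by norm_num) p.le_succ))
  have hM₃ : (1 + c) * A * 3 ^ p ≤ A * rateConst p c := by
    rw [mul_comm (1 + c), mul_assoc]
    refine hM ?_
    rw [pow_succ' 3 p]
    gcongr
    linarith
  have hβ := add_le_errorConst hc₀ hc hd (hf₀ 0)
  have hβ₁ : d ≤ errorConst p c d (f 0) :=
    (le_add_of_nonneg_right (mul_nonneg (by positivity) (hf₀ 0))).trans hβ
  have hβ₂ : c * 2 ^ (p + 2) * f 0 ≤ errorConst p c d (f 0) :=
    (le_add_of_nonneg_left hd).trans hβ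
  have hβ₃ := mul_three_pow_mul_le_errorConst hp hc₀ hc hd (hf₀ 0)
  rcases hn.eq_or_lt with rfl | hn₂
  · simpa using gap_one_le_rateEnvelope (p := p) hf₁ hM₁ hβ₁
  · obtain ⟨m, rfl⟩ := Nat.exists_eq_add_of_le' hn₂
    exact_mod_cast hf.le_rateEnvelope hc₀ hc2 hA
      (mul_le_mul_of_nonneg_left (pow_le_rateConst hc₀ hc) hA)
      (gap_two_le_rateEnvelope hf hc₀ (hf₀ 1) hM₂ hβ₂)
      (gap_three_le_rateEnvelope hf hc₀ (hf₀ 2) hf₁ hM₃ hβ₃) m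

section TensorStep

variable {E : Type*} [SeminormedAddCommGroup E] [NormedSpace ℝ E]

lemma gap_le_of_regularized_step {s : Set E} {F : E → ℝ} (hF : ConvexOn ℝ s F) {x z : E}
    (hx : x ∈ s) (hz : z ∈ s) {D H v ε : ℝ} {m : ℕ} (hD : ‖x - z‖ ≤ D) (hH : 0 ≤ H)
    (hstep : ∀ y ∈ s, v ≤ F y + H * ‖y - x‖ ^ m + ε) {a : ℝ} (ha₀ : 0 ≤ a) (ha₁ : a ≤ 1) :
    v - F z ≤ (1 - a) * (F x - F z) + H * D ^ m * a ^ m + ε := by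
  have hconv : F ((1 - a) • x + a • z) ≤ (1 - a) * F x + a * F z :=
    hF.2 hx hz (sub_nonneg.2 ha₁) ha₀ (sub_add_cancel 1 a)
  have hnorm : ‖(1 - a) • x + a • z - x‖ ≤ D * a := by
    rw [show (1 - a) • x + a • z - x = -(a • (x - z)) by module, norm_neg, norm_smul,
      Real.norm_of_nonneg ha₀, mul_comm]
    gcongr
  have hpow : H * ‖(1 - a) • x + a • z - x‖ ^ m ≤ H * D ^ m * a ^ m := by
    rw [mul_assoc, ← mul_pow]
    gcongr
  linarith [hstep _ (hF.1 hx hz (sub_nonneg.2 ha₁) ha₀ (sub_add_cancel 1 a))]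

theorem monotone_inexact_tensor_method_II_convergence_general
    {p : ℕ} (hp : 1 ≤ p) {L : ℝ} (hL : 0 ≤ L)
    {domF : Set E} {F : E → ℝ} (hconv : ConvexOn ℝ domF F)
    {xstar : E} (hxstar : xstar ∈ domF) (hmin : ∀ z ∈ domF, F xstar ≤ F z)
    {x : ℕ → E} (hxdom : ∀ k, x k ∈ domF)
    {D : ℝ} (hD : ∀ z ∈ domF, F z ≤ F (x 0) → ‖z - xstar‖ ≤ D)
    {c : ℝ} (hc₀ : 0 ≤ c) (hc : c < 1 / invThreshold p)
    {δ : ℕ → ℝ} (hδ₁ : 0 ≤ δ 1) (hδ : ∀ k, δ (k + 2) = c * (F (x k) - F (x (k + 1))))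
    (hmono : ∀ k, F (x (k + 1)) ≤ F (x k))
    (hstep : ∀ k, ∀ y ∈ domF,
      F (x (k + 1)) ≤ F y + L / p.factorial * ‖y - x k‖ ^ (p + 1) + δ (k + 1))
    {k : ℕ} (hk : 1 ≤ k) :
    F (x k) - F xstar ≤ rateEnvelope p (L / p.factorial * D ^ (p + 1) * rateConst p c)
      (errorConst p c (δ 1) (F (x 0) - F xstar)) k := by
  have hdist (k : ℕ) : ‖x k - xstar‖ ≤ D :=
    hD _ (hxdom k) (antitone_nat_of_succ_le (f := fun k => F (x k)) hmono k.zero_le)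
  have hD₀ : 0 ≤ D := (norm_nonneg _).trans (hdist 0)
  have hgap (k : ℕ) {a : ℝ} (ha₀ : 0 ≤ a) (ha₁ : a ≤ 1) :=
    gap_le_of_regularized_step hconv (hxdom k) hxstar (hdist k) (by positivity) (hstep k) ha₀ ha₁
  have hfirst : F (x 1) - F xstar ≤ L / p.factorial * D ^ (p + 1) + δ 1 := by
    simpa using hgap 0 zero_le_one le_rfl
  have hrec : GapRecurrence p c (L / p.factorial * D ^ (p + 1)) fun k => F (x k) - F xstar := by
    intro k a ha₀ ha₁
    linarith [hgap (k + 1) ha₀ ha₁, hδ k]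
  exact gap_le_rateEnvelope hp hc₀ ((lt_div_iff₀ (invThreshold_pos p)).1 hc) (by positivity) hδ₁
    (fun k => sub_nonneg.2 (hmin _ (hxdom k))) hfirst hrec hk

end TensorStep

/-- Theorem 3.3: convergence of the Monotone Inexact Tensor Method II with the adaptive
inner accuracies `δ_k = c (F(x_{k-2}) - F(x_{k-1}))` for `k ≥ 2`.  The extended-valued
convex objective `F` is modeled by a real-valued function on its domain `domF`.  `D` is (an
upper bound on) the radius of the initial level set around the minimizer `x*`. -/
theorem monotone_inexact_tensor_method_II_convergence
    {E : Type*} [NormedAddCommGroup E] [InnerProductSpace ℝ E] [FiniteDimensional ℝ E]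
    (p : ℕ) (hp : 1 ≤ p) (L : ℝ) (hL : 0 < L)
    (domF : Set E) (F : E → ℝ) (hconv : ConvexOn ℝ domF F)
    (xstar : E) (hxstar : xstar ∈ domF) (hmin : ∀ z ∈ domF, F xstar ≤ F z)
    (x : ℕ → E) (hxdom : ∀ k, x k ∈ domF)
    (D : ℝ) (hD : ∀ z ∈ domF, F z ≤ F (x 0) → ‖z - xstar‖ ≤ D)
    (c : ℝ) (hc0 : 0 ≤ c) (hc1 : c < 1 / (((p : ℝ) + 2) * 3 ^ (p + 1) - 1))
    (δ : ℕ → ℝ) (hδ1 : 0 ≤ δ 1)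
    (hδ : ∀ k : ℕ, 2 ≤ k → δ k = c * (F (x (k - 2)) - F (x (k - 1))))
    (hmono : ∀ k : ℕ, F (x (k + 1)) ≤ F (x k))
    (hstep : ∀ k : ℕ, ∀ y ∈ domF,
      F (x (k + 1)) ≤ F y + L / (Nat.factorial p : ℝ) * ‖y - x k‖ ^ (p + 1) + δ (k + 1)) :
    ∀ k : ℕ, 1 ≤ k →
      F (x k) - F xstar ≤
        (((p : ℝ) + 2) ^ (p + 1) / (1 - c * (((p : ℝ) + 2) * 3 ^ (p + 1) - 1)))
            * L * D ^ (p + 1) / ((Nat.factorial p : ℝ) * (k : ℝ) ^ p)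
          + ((δ 1 + c * 2 ^ (p + 2) * (F (x 0) - F xstar))
              / (1 - c * (((p : ℝ) + 2) ^ 2 / ((p : ℝ) + 1) - 1))) / (k : ℝ) ^ (p + 2) := by
  intro k hk
  refine (monotone_inexact_tensor_method_II_convergence_general hp hL.le hconv hxstar hmin hxdom hD
    hc0 hc1 hδ1 (fun k => hδ (k + 2) le_add_self) hmono hstep hk).trans_eq ?_
  rw [rateEnvelope, rateConst, errorConst, invThreshold, errorFactor]
  ring
end

section
/- (Theorem 3.6, convergence of the Inexact Tensor Method with Averaging.) Let p ≥ 1 be an integer, L_p > 0, c ≥ 0, and let F : E → ℝ ∪ {+∞} be convex with minimizer x* and minimal value F*. Let x_0 ∈ dom F, and define for k ≥ 0: λ_k = (k/(k+1))^{p+1} and y_k = λ_k x_k + (1 − λ_k) x_0. Assume the sequence (x_k)_{k≥0} satisfies, for every k ≥ 0 and every y ∈ dom F: F(x_{k+1}) ≤ F(y) + (L_p/p!)‖y − y_k‖^{p+1} + δ_{k+1}, where δ_k = c/k^{p+1}. Then for every k ≥ 1: F(x_k) − F* ≤ (p+1)^{p+1} L_p ‖x_0 − x*‖^{p+1}/(p!·k^p)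 + c/k^p. -/
/-!
Fix a comparison point `v`, such as the minimizer, and test the step inequality at
`λ_k x_k + (1 - λ_k) v`. Subtracting `y_k` leaves `(1 - λ_k)(v - x_0)`, so convexity contracts the
gap `F(x_k) - F(v)` by the factor `λ_k`, at the cost of `M ((1 - λ_k) ‖x_0 - v‖) ^ n`. As
`λ_k = (k / (k + 1)) ^ n`, multiplying by `(k + 1) ^ n` turns the contracted gap into
`k ^ n (F(x_k) - F(v))`, and Bernoulli's inequality `(k + 1)(1 - λ_k) ≤ n` bounds the cost uniformly
in `k`, so the weighted gaps telescope.
-/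

open Finset

/-- The averaging weight `λ_k = (k / (k + 1)) ^ n` of the tensor method, which mixes the current
iterate with the starting point. The order `p` enters as `n = p + 1`. -/
noncomputable def averagingWeight (n k : ℕ) : ℝ := ((k : ℝ) / ((k : ℝ) + 1)) ^ n

section AveragingWeight

variable (n k : ℕ)

theorem averagingWeight_nonneg : 0 ≤ averagingWeight n k := by
  unfold averagingWeight
  positivity

theorem averagingWeight_le_one : averagingWeight n k ≤ 1 :=
  pow_le_one₀ (by positivity) (div_le_one_of_le₀ (by linarith) (by positivity))

theorem add_one_pow_mul_averagingWeight :
    ((k : ℝ) + 1) ^ n * averagingWeight n k = (k : ℝ) ^ n := by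
  rw [averagingWeight, div_pow, mul_div_cancel₀ _ (by positivity)]

theorem add_one_mul_one_sub_averagingWeight_le :
    ((k : ℝ) + 1) * (1 - averagingWeight n k) ≤ n := by
  have hk : (0 : ℝ) < (k : ℝ) + 1 := by positivity
  have hratio : (k : ℝ) / ((k : ℝ) + 1) - 1 = -(1 / ((k : ℝ) + 1)) := by field_simp; ring
  have bernoulli : 1 + n * ((k : ℝ) / ((k : ℝ) + 1) - 1) ≤ averagingWeight n k :=
    one_add_mul_sub_le_pow (neg_one_lt_zero.le.trans (div_nonneg k.cast_nonneg hk.le)) n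
  rw [hratio] at bernoulli
  calc ((k : ℝ) + 1) * (1 - averagingWeight n k)
      ≤ ((k : ℝ) + 1) * (n * (1 / ((k : ℝ) + 1))) := by gcongr; linarith
    _ = n := by field_simp

end AveragingWeight

section AveragedSteps

variable {E : Type*} [SeminormedAddCommGroup E] [NormedSpace ℝ E] {s : Set E} {F : E → ℝ}
  {v : E} {M : ℝ} {n : ℕ}

theorem gap_le_of_averaged_step (hF : ConvexOn ℝ s F) {u w x₀ : E} (hu : u ∈ s) (hv : v ∈ s)
    {a ε : ℝ} (ha₀ : 0 ≤ a) (ha₁ : a ≤ 1)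
    (hstep : ∀ z ∈ s, F w ≤ F z + M * ‖z - (a • u + (1 - a) • x₀)‖ ^ n + ε) :
    F w - F v ≤ a * (F u - F v) + M * ((1 - a) * ‖x₀ - v‖) ^ n + ε := by
  have hb : 0 ≤ 1 - a := sub_nonneg.2 ha₁
  have hab : a + (1 - a) = 1 := add_sub_cancel a 1
  have hnorm : ‖a • u + (1 - a) • v - (a • u + (1 - a) • x₀)‖ = (1 - a) * ‖x₀ - v‖ := by
    rw [add_sub_add_left_eq_sub, ← smul_sub, norm_smul, Real.norm_of_nonneg hb, norm_sub_rev]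
  have hdescent := hstep _ (hF.1 hu hv ha₀ hb hab)
  have hconvex : F (a • u + (1 - a) • v) ≤ a * F u + (1 - a) * F v := hF.2 hu hv ha₀ hb hab
  rw [hnorm] at hdescent
  linarith

theorem add_one_pow_mul_gap_le_of_averaged_step (hF : ConvexOn ℝ s F) (hM : 0 ≤ M)
    {u w x₀ : E} (hu : u ∈ s) (hv : v ∈ s) {k : ℕ} {ε : ℝ}
    (hstep : ∀ z ∈ s, F w ≤
      F z + M * ‖z - (averagingWeight n k • u + (1 - averagingWeight n k) • x₀)‖ ^ n + ε) :
    ((k : ℝ) + 1) ^ n * (F w - F v) ≤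
      (k : ℝ) ^ n * (F u - F v) + M * (n * ‖x₀ - v‖) ^ n + ((k : ℝ) + 1) ^ n * ε := by
  have hgap := gap_le_of_averaged_step hF hu hv (averagingWeight_nonneg n k)
    (averagingWeight_le_one n k) hstep
  have hb : 0 ≤ 1 - averagingWeight n k := sub_nonneg.2 (averagingWeight_le_one n k)
  calc ((k : ℝ) + 1) ^ n * (F w - F v)
      ≤ ((k : ℝ) + 1) ^ n * (averagingWeight n k * (F u - F v)
          + M * ((1 - averagingWeight n k) * ‖x₀ - v‖) ^ n + ε) := by gcongr
    _ = ((k : ℝ) + 1) ^ n * averagingWeight n k * (F u - F v)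
          + M * (((k : ℝ) + 1) * (1 - averagingWeight n k) * ‖x₀ - v‖) ^ n
          + ((k : ℝ) + 1) ^ n * ε := by simp only [mul_pow]; ring
    _ ≤ (k : ℝ) ^ n * (F u - F v) + M * (n * ‖x₀ - v‖) ^ n + ((k : ℝ) + 1) ^ n * ε := by
      rw [add_one_pow_mul_averagingWeight]
      gcongr
      exact add_one_mul_one_sub_averagingWeight_le n k

theorem pow_mul_gap_le_of_averaged_steps (hF : ConvexOn ℝ s F) (hM : 0 ≤ M) (hn : n ≠ 0)
    {x : ℕ → E} (hx : ∀ k, x k ∈ s) (hv : v ∈ s) {δ : ℕ → ℝ}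
    (hstep : ∀ k, ∀ z ∈ s, F (x (k + 1)) ≤
      F z + M * ‖z - (averagingWeight n k • x k + (1 - averagingWeight n k) • x 0)‖ ^ n
        + δ (k + 1)) (k : ℕ) :
    (k : ℝ) ^ n * (F (x k) - F v) ≤
      k * (M * (n * ‖x 0 - v‖) ^ n) + ∑ i ∈ Icc 1 k, (i : ℝ) ^ n * δ i := by
  induction k with
  | zero => simp [hn]
  | succ k ih =>
    have hsucc := add_one_pow_mul_gap_le_of_averaged_step hF hM (hx k) hv (hstep k)
    rw [sum_Icc_succ_top (Nat.le_add_left 1 k)]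
    push_cast
    linarith

end AveragedSteps

theorem sum_Icc_pow_succ_mul_div_pow_succ {p : ℕ} {c : ℝ} {δ : ℕ → ℝ}
    (hδ : ∀ k : ℕ, 1 ≤ k → δ k = c / (k : ℝ) ^ (p + 1)) {k : ℕ} (hk : 1 ≤ k) :
    (∑ i ∈ Icc 1 k, (i : ℝ) ^ (p + 1) * δ i) / (k : ℝ) ^ (p + 1) = c / (k : ℝ) ^ p := by
  have hterm : ∀ i ∈ Icc 1 k, (i : ℝ) ^ (p + 1) * δ i = c := fun i hi ↦ by
    have hi₁ : 1 ≤ i := (mem_Icc.1 hi).1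
    rw [hδ i hi₁, mul_div_cancel₀ c (by positivity)]
  have hsum : ∑ i ∈ Icc 1 k, (i : ℝ) ^ (p + 1) * δ i = k * c := by simp [sum_congr rfl hterm]
  rw [hsum, pow_succ', mul_div_mul_left _ _ (by positivity)]

theorem inexact_tensor_method_with_averaging_convergence_general
    {E : Type*} [SeminormedAddCommGroup E] [NormedSpace ℝ E] {p : ℕ} {L : ℝ} (hL : 0 ≤ L)
    {domF : Set E} {F : E → ℝ} (hconv : ConvexOn ℝ domF F) {v : E} (hv : v ∈ domF)
    {x : ℕ → E} (hxdom : ∀ k, x k ∈ domF) {δ : ℕ → ℝ}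
    (hstep : ∀ k : ℕ, ∀ z ∈ domF, F (x (k + 1)) ≤
      F z + L / (Nat.factorial p : ℝ) * ‖z - (averagingWeight (p + 1) k • x k
        + (1 - averagingWeight (p + 1) k) • x 0)‖ ^ (p + 1) + δ (k + 1))
    {k : ℕ} (hk : 1 ≤ k) :
    F (x k) - F v ≤
      ((p : ℝ) + 1) ^ (p + 1) * L * ‖x 0 - v‖ ^ (p + 1) / ((Nat.factorial p : ℝ) * (k : ℝ) ^ p)
        + (∑ i ∈ Icc 1 k, (i : ℝ) ^ (p + 1) * δ i) / (k : ℝ) ^ (p + 1) := by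
  have hk₀ : (0 : ℝ) < k := by exact_mod_cast hk
  have hweighted := pow_mul_gap_le_of_averaged_steps hconv (by positivity)
    (Nat.add_one_ne_zero p) hxdom hv hstep k
  rw [← le_div_iff₀' (by positivity)] at hweighted
  refine hweighted.trans_eq ?_
  push_cast
  rw [add_div, pow_succ' (k : ℝ) p, mul_div_mul_left _ _ hk₀.ne', mul_pow]
  field_simp

/-- Theorem 3.6: convergence of the Inexact Tensor Method with Averaging, where each
inexact tensor step with accuracy `δ_{k+1} = c/(k+1)^{p+1}` is taken from the averaged
point `y_k = λ_k x_k + (1 - λ_k) x_0`, `λ_k = (k/(k+1))^{p+1}`.  The extended-valued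
convex objective `F` is modeled by a real-valued function on its domain `domF`. -/
theorem inexact_tensor_method_with_averaging_convergence
    {E : Type*} [NormedAddCommGroup E] [InnerProductSpace ℝ E] [FiniteDimensional ℝ E]
    (p : ℕ) (hp : 1 ≤ p) (L c : ℝ) (hL : 0 < L) (hc : 0 ≤ c)
    (domF : Set E) (F : E → ℝ) (hconv : ConvexOn ℝ domF F)
    (xstar : E) (hxstar : xstar ∈ domF) (hmin : ∀ z ∈ domF, F xstar ≤ F z)
    (x : ℕ → E) (hxdom : ∀ k, x k ∈ domF)
    (lam : ℕ → ℝ) (hlam : ∀ k : ℕ, lam k = ((k : ℝ) / ((k : ℝ) + 1)) ^ (p + 1))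
    (y : ℕ → E) (hy : ∀ k : ℕ, y k = lam k • x k + (1 - lam k) • x 0)
    (δ : ℕ → ℝ) (hδ : ∀ k : ℕ, 1 ≤ k → δ k = c / (k : ℝ) ^ (p + 1))
    (hstep : ∀ k : ℕ, ∀ z ∈ domF,
      F (x (k + 1)) ≤ F z + L / (Nat.factorial p : ℝ) * ‖z - y k‖ ^ (p + 1) + δ (k + 1)) :
    ∀ k : ℕ, 1 ≤ k →
      F (x k) - F xstar ≤
        ((p : ℝ) + 1) ^ (p + 1) * L * ‖x 0 - xstar‖ ^ (p + 1)
            / ((Nat.factorial p : ℝ) * (k : ℝ) ^ p)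
          + c / (k : ℝ) ^ p := by
  intro k hk
  rw [← sum_Icc_pow_succ_mul_div_pow_succ hδ hk]
  exact inexact_tensor_method_with_averaging_convergence_general hL.le hconv hxstar hxdom
    (by simpa only [averagingWeight, hy, hlam] using hstep) hk
end

section
/- Let E be a finite-dimensional real inner product space, x_0 ∈ E, p ≥ 1 an integer, and d(x) = ‖x − x_0‖^{p+1}/(p+1). Then for every x ≠ x_0 and every h ∈ E, the second derivative of d satisfies D²d(x)[h,h] ≤ p·‖x − x_0‖^{p−1}·‖h‖². -/
/-!
Up to translation the gradient of `d` is `x ↦ ‖x‖ ^ (p - 1) • ⟪x, ·⟫`, and the product rule gives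
`D²d(x)[h,k] = ‖x‖ ^ (p - 1) * ⟪h, k⟫ + (p - 1) * ‖x‖ ^ (p - 3) * ⟪x, h⟫ * ⟪x, k⟫`. For `k = h`,
Cauchy–Schwarz bounds the second summand by `(p - 1) * ‖x‖ ^ (p - 1) * ‖h‖ ^ 2`. The formula also
holds at the origin when `1 ≤ p`, its second summand being zero there: the linear factor of the
gradient vanishes at the origin, so continuity of the factor `‖x‖ ^ (p - 1)` is enough.
-/

open Asymptotics Topology
open scoped RealInnerProductSpace

theorem hasFDerivAt_smul_of_continuousAt_of_eq_zero {𝕜 E F : Type*} [NontriviallyNormedField 𝕜]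
    [NormedAddCommGroup E] [NormedSpace 𝕜 E] [NormedAddCommGroup F] [NormedSpace 𝕜 F]
    {c : E → 𝕜} {f : E → F} {f' : E →L[𝕜] F} {x : E}
    (hc : ContinuousAt c x) (hf : HasFDerivAt f f' x) (hfx : f x = 0) :
    HasFDerivAt (fun y ↦ c y • f y) (c x • f') x := by
  have hdiff : (fun y ↦ c y - c x) =o[𝓝 x] (1 : E → 𝕜) :=
    (isLittleO_one_iff 𝕜).mpr (tendsto_sub_nhds_zero_iff.mpr hc)
  have hf_bigO : f =O[𝓝 x] fun y ↦ y - x := by simpa [hfx] using hf.isBigO_sub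
  have hrem : HasFDerivAt (fun y ↦ (c y - c x) • f y) (0 : E →L[𝕜] F) x :=
    .of_isLittleO (by simpa [hfx] using hdiff.smul_isBigO hf_bigO)
  simpa [← add_smul] using (hf.fun_const_smul (c x)).fun_add hrem

section InnerProductSpace

variable {E F : Type*} [NormedAddCommGroup E] [InnerProductSpace ℝ E]
  [NormedAddCommGroup F] [NormedSpace ℝ F]

theorem hasFDerivAt_norm_rpow_of_ne_zero {x : E} (hx : x ≠ 0) (s : ℝ) :
    HasFDerivAt (fun y : E ↦ ‖y‖ ^ s) ((s * ‖x‖ ^ (s - 2)) • innerSL ℝ x) x := by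
  have hsq : HasFDerivAt (fun y : E ↦ ‖y‖ ^ 2) (2 • innerSL ℝ x) x :=
    (hasStrictFDerivAt_norm_sq x).hasFDerivAt
  have hpow := hsq.rpow_const (p := s / 2) (.inl (by simpa using hx))
  simp only [← Real.rpow_natCast_mul (norm_nonneg _)] at hpow
  convert! hpow using 1
  · ring_nf
  · rw [← Nat.cast_smul_eq_nsmul ℝ, smul_smul]
    ring_nf

theorem hasFDerivAt_norm_rpow_smul_clm {s : ℝ} (hs : 0 ≤ s) (A : E →L[ℝ] F) (x : E) :
    HasFDerivAt (fun y ↦ ‖y‖ ^ s • A y)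
      (‖x‖ ^ s • A + (s * ‖x‖ ^ (s - 2)) • (innerSL ℝ x).smulRight (A x)) x := by
  rcases eq_or_ne x 0 with rfl | hx
  · have hcont : ContinuousAt (fun y : E ↦ ‖y‖ ^ s) 0 := continuousAt_id.norm.rpow_const (.inr hs)
    simpa using hasFDerivAt_smul_of_continuousAt_of_eq_zero hcont A.hasFDerivAt A.map_zero
  · refine ((hasFDerivAt_norm_rpow_of_ne_zero hx s).fun_smul A.hasFDerivAt).congr_fderiv ?_
    ext h
    simp [smul_smul]

theorem hasFDerivAt_norm_rpow_add_one_div {p : ℝ} (hp : 0 < p) (x : E) :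
    HasFDerivAt (fun y : E ↦ ‖y‖ ^ (p + 1) / (p + 1)) (‖x‖ ^ (p - 1) • innerSL ℝ x) x := by
  have hp' : p + 1 ≠ 0 := by positivity
  have hpow := (hasFDerivAt_norm_rpow x (by linarith : 1 < p + 1)).mul_const (p + 1)⁻¹
  simp only [← div_eq_mul_inv] at hpow
  refine hpow.congr_fderiv ?_
  rw [smul_smul, inv_mul_cancel_left₀ hp']
  ring_nf

theorem iteratedFDeriv_two_norm_rpow_add_one_div {p : ℝ} (hp : 1 ≤ p) (x : E) (m : Fin 2 → E) :
    iteratedFDeriv ℝ 2 (fun y : E ↦ ‖y‖ ^ (p + 1) / (p + 1)) x m =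
      ‖x‖ ^ (p - 1) * ⟪m 0, m 1⟫ + (p - 1) * ‖x‖ ^ (p - 3) * (⟪x, m 0⟫ * ⟪x, m 1⟫) := by
  have hgrad : fderiv ℝ (fun y : E ↦ ‖y‖ ^ (p + 1) / (p + 1)) =
      fun y ↦ ‖y‖ ^ (p - 1) • innerSL ℝ y :=
    funext fun y ↦ (hasFDerivAt_norm_rpow_add_one_div (by linarith) y).fderiv
  have hhess := hasFDerivAt_norm_rpow_smul_clm (sub_nonneg.mpr hp) (innerSL ℝ (E := E)) x
  rw [iteratedFDeriv_two_apply, hgrad, hhess.fderiv]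
  change ‖x‖ ^ (p - 1) * ⟪m 0, m 1⟫ + (p - 1) * ‖x‖ ^ (p - 1 - 2) * (⟪x, m 0⟫ * ⟪x, m 1⟫) = _
  ring_nf

theorem norm_rpow_sub_two_mul_inner_sq_le (x h : E) (s : ℝ) :
    ‖x‖ ^ (s - 2) * ⟪x, h⟫ ^ 2 ≤ ‖x‖ ^ s * ‖h‖ ^ 2 := by
  rcases eq_or_ne x 0 with rfl | hx
  · rw [inner_zero_left, zero_pow two_ne_zero, mul_zero]
    positivity
  calc ‖x‖ ^ (s - 2) * ⟪x, h⟫ ^ 2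
      ≤ ‖x‖ ^ (s - 2) * (‖x‖ * ‖h‖) ^ 2 := by
        gcongr ?_ * ?_
        exact sq_le_sq.mpr ((abs_real_inner_le_norm x h).trans (le_abs_self _))
    _ = ‖x‖ ^ s * ‖h‖ ^ 2 := by
        rw [mul_pow, ← mul_assoc, ← Real.rpow_add_natCast (norm_ne_zero_iff.mpr hx)]
        norm_num

theorem second_derivative_of_power_of_norm_bound_general {p : ℝ} (hp : 1 ≤ p) (x₀ x h : E) :
    iteratedFDeriv ℝ 2 (fun y ↦ ‖y - x₀‖ ^ (p + 1) / (p + 1)) x (fun _ ↦ h) ≤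
      p * ‖x - x₀‖ ^ (p - 1) * ‖h‖ ^ 2 := by
  have hcs := norm_rpow_sub_two_mul_inner_sq_le (x - x₀) h (p - 1)
  rw [iteratedFDeriv_comp_sub (f := fun y : E ↦ ‖y‖ ^ (p + 1) / (p + 1)),
    iteratedFDeriv_two_norm_rpow_add_one_div hp, real_inner_self_eq_norm_sq]
  set r := ‖x - x₀‖
  calc r ^ (p - 1) * ‖h‖ ^ 2 + (p - 1) * r ^ (p - 3) * (⟪x - x₀, h⟫ * ⟪x - x₀, h⟫)
      = r ^ (p - 1) * ‖h‖ ^ 2 + (p - 1) * (r ^ (p - 1 - 2) * ⟪x - x₀, h⟫ ^ 2) := by ring_nf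
    _ ≤ r ^ (p - 1) * ‖h‖ ^ 2 + (p - 1) * (r ^ (p - 1) * ‖h‖ ^ 2) := by
        gcongr
    _ = p * r ^ (p - 1) * ‖h‖ ^ 2 := by ring

end InnerProductSpace

/-- For `d(x) = ‖x - x₀‖^{p+1}/(p+1)`, the second derivative satisfies
`D²d(x)[h,h] ≤ p ‖x - x₀‖^{p-1} ‖h‖²` for every `x ≠ x₀` and every direction `h`. -/
theorem second_derivative_of_power_of_norm_bound
    {E : Type*} [NormedAddCommGroup E] [InnerProductSpace ℝ E] [FiniteDimensional ℝ E]
    (x₀ : E) (p : ℕ) (hp : 1 ≤ p)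
    (d : E → ℝ) (hd : ∀ x, d x = ‖x - x₀‖ ^ (p + 1) / ((p : ℝ) + 1)) :
    ∀ x : E, x ≠ x₀ → ∀ h : E,
      iteratedFDeriv ℝ 2 d x (fun _ => h) ≤ (p : ℝ) * ‖x - x₀‖ ^ (p - 1) * ‖h‖ ^ 2 := by
  intro x _ h
  simpa only [funext hd, ← Real.rpow_natCast, Nat.cast_add_one, Nat.cast_pred hp] using
    second_derivative_of_power_of_norm_bound_general (Nat.one_le_cast.mpr hp) x₀ x h
end

section
/- Let E be a finite-dimensional real inner product space, x_0 ∈ E, p ≥ 1 an integer, and d(x) = ‖x − x_0‖^{p+1}/(p+1). Then for all v, z ∈ E and any ξ ≥ ‖v − z‖: ‖∇d(v) − ∇d(z)‖ ≤ p·2^{p−2}·‖z − x_0‖^{p−1}·ξ + 2^{p−2}·ξ^p. -/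
/-!
Let `φ ≥ 0` be nondecreasing with `r ↦ φ r * r` convex on `[0, ∞)`, and let `‖a - b‖ ≤ ξ`. If
`‖b‖ ≤ ‖a‖`, writing `φ ‖a‖ • a - φ ‖b‖ • b = φ ‖a‖ • (a - b) + (φ ‖a‖ - φ ‖b‖) • b` and applying
the triangle inequality bounds its norm by the increment of `r ↦ φ r * r` from `‖b‖` to `‖b‖ + ξ`.
If `‖a‖ ≤ ‖b‖`, the same argument gives the increment from `‖a‖` to `‖a‖ + ξ`, which by convexity
is no larger. For `φ r = r ^ (p - 1)` it remains to bound `(s + ξ) ^ p - s ^ p`, which follows by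
integrating `(s + t) ^ (p - 1) ≤ 2 ^ (p - 2) * (s ^ (p - 1) + t ^ (p - 1))` over `t ∈ [0, ξ]`.
-/

open Set

theorem increment_le_increment_of_convexOn {𝕜 : Type*} [Field 𝕜] [LinearOrder 𝕜]
    [IsStrictOrderedRing 𝕜] {s : Set 𝕜} {f : 𝕜 → 𝕜} (hf : ConvexOn 𝕜 s f) {x y t : 𝕜}
    (hx : x ∈ s) (hyt : y + t ∈ s) (hxy : x ≤ y) (ht : 0 ≤ t) :
    f (x + t) - f x ≤ f (y + t) - f y := by
  obtain rfl | hxy := hxy.eq_or_lt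
  · rfl
  obtain rfl | ht := ht.eq_or_lt
  · simp
  have at_left := hf.secant_mono_aux1 (y := x + t) hx hyt (by linarith) (by linarith)
  have at_right := hf.secant_mono_aux1 hx hyt hxy (by linarith)
  have hlength : 0 < y + t - x := by linarith
  refine le_of_mul_le_mul_left ?_ hlength
  linear_combination at_left + at_right

section RadialField

variable {E : Type*} [SeminormedAddCommGroup E] [NormedSpace ℝ E] {φ : ℝ → ℝ} {a b : E} {ξ : ℝ}

theorem norm_radial_sub_radial_le_increment_of_norm_le (hφ : MonotoneOn φ (Ici 0))
    (hφ₀ : 0 ≤ φ 0) (hba : ‖b‖ ≤ ‖a‖) (hab : ‖a - b‖ ≤ ξ) :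
    ‖φ ‖a‖ • a - φ ‖b‖ • b‖ ≤ φ (‖b‖ + ξ) * (‖b‖ + ξ) - φ ‖b‖ * ‖b‖ := by
  have ha : 0 ≤ ‖a‖ := norm_nonneg a
  have hb : 0 ≤ ‖b‖ := norm_nonneg b
  have hbξ : 0 ≤ ‖b‖ + ξ := add_nonneg hb ((norm_nonneg _).trans hab)
  have ha_le : ‖a‖ ≤ ‖b‖ + ξ := by linarith [norm_sub_norm_le a b]
  have hφa : 0 ≤ φ ‖a‖ := hφ₀.trans (hφ self_mem_Ici ha ha)
  have hφba : 0 ≤ φ ‖a‖ - φ ‖b‖ := sub_nonneg.2 (hφ hb ha hba)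
  calc ‖φ ‖a‖ • a - φ ‖b‖ • b‖
      = ‖φ ‖a‖ • (a - b) + (φ ‖a‖ - φ ‖b‖) • b‖ := by congr 1; module
    _ ≤ ‖φ ‖a‖ • (a - b)‖ + ‖(φ ‖a‖ - φ ‖b‖) • b‖ := norm_add_le _ _
    _ = φ ‖a‖ * ‖a - b‖ + (φ ‖a‖ - φ ‖b‖) * ‖b‖ := by
        rw [norm_smul_of_nonneg hφa, norm_smul_of_nonneg hφba]
    _ ≤ φ ‖a‖ * ξ + (φ ‖a‖ - φ ‖b‖) * ‖b‖ := by gcongr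
    _ = φ ‖a‖ * (‖b‖ + ξ) - φ ‖b‖ * ‖b‖ := by ring
    _ ≤ φ (‖b‖ + ξ) * (‖b‖ + ξ) - φ ‖b‖ * ‖b‖ := by
        gcongr
        exact hφ ha hbξ ha_le

theorem norm_radial_sub_radial_le_increment (hφ : MonotoneOn φ (Ici 0)) (hφ₀ : 0 ≤ φ 0)
    (hconv : ConvexOn ℝ (Ici 0) fun r => φ r * r) (hab : ‖a - b‖ ≤ ξ) :
    ‖φ ‖a‖ • a - φ ‖b‖ • b‖ ≤ φ (‖b‖ + ξ) * (‖b‖ + ξ) - φ ‖b‖ * ‖b‖ := by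
  obtain hba | hnorm_le := le_total ‖b‖ ‖a‖
  · exact norm_radial_sub_radial_le_increment_of_norm_le hφ hφ₀ hba hab
  have hξ : 0 ≤ ξ := (norm_nonneg _).trans hab
  calc ‖φ ‖a‖ • a - φ ‖b‖ • b‖
      = ‖φ ‖b‖ • b - φ ‖a‖ • a‖ := norm_sub_rev _ _
    _ ≤ φ (‖a‖ + ξ) * (‖a‖ + ξ) - φ ‖a‖ * ‖a‖ :=
        norm_radial_sub_radial_le_increment_of_norm_le hφ hφ₀ hnorm_le (norm_sub_rev a b ▸ hab)
    _ ≤ φ (‖b‖ + ξ) * (‖b‖ + ξ) - φ ‖b‖ * ‖b‖ :=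
        increment_le_increment_of_convexOn hconv (norm_nonneg a)
          (add_nonneg (norm_nonneg b) hξ) hnorm_le hξ

theorem norm_rpow_smul_sub_rpow_smul_le {p : ℝ} (hp : 1 ≤ p) (hab : ‖a - b‖ ≤ ξ) :
    ‖‖a‖ ^ (p - 1) • a - ‖b‖ ^ (p - 1) • b‖ ≤ (‖b‖ + ξ) ^ p - ‖b‖ ^ p := by
  have hmul {r : ℝ} (hr : 0 ≤ r) : r ^ (p - 1) * r = r ^ p := by
    rw [← Real.rpow_add_one' hr (by linarith), sub_add_cancel]
  have hconv : ConvexOn ℝ (Ici 0) fun r : ℝ => r ^ (p - 1) * r :=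
    (convexOn_rpow hp).congr fun _ hr => (hmul hr).symm
  have hξ : 0 ≤ ξ := (norm_nonneg _).trans hab
  have h := norm_radial_sub_radial_le_increment
    (Real.monotoneOn_rpow_Ici_of_exponent_nonneg (sub_nonneg.2 hp)) (Real.zero_rpow_nonneg _)
    hconv hab
  rwa [hmul (norm_nonneg b), hmul (add_nonneg (norm_nonneg b) hξ)] at h

end RadialField

section RpowIncrement

variable {s t p q : ℝ}

theorem add_rpow_le_two_rpow_mul_rpow_add_rpow (hs : 0 ≤ s) (ht : 0 ≤ t) (hq : q = 0 ∨ 1 ≤ q) :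
    (s + t) ^ q ≤ 2 ^ (q - 1) * (s ^ q + t ^ q) := by
  obtain rfl | hq := hq
  · norm_num [Real.rpow_neg_one]
  · lift s to NNReal using hs
    lift t to NNReal using ht
    exact_mod_cast NNReal.rpow_add_le_mul_rpow_add_rpow s t hq

theorem add_rpow_sub_rpow_le (hs : 0 ≤ s) (ht : 0 ≤ t) (hp : p = 1 ∨ 2 ≤ p) :
    (s + t) ^ p - s ^ p ≤ 2 ^ (p - 2) * (p * s ^ (p - 1) * t + t ^ p) := by
  have hp_one : 1 ≤ p := by rcases hp with rfl | hp <;> linarith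
  let gap : ℝ → ℝ := fun u => 2 ^ (p - 2) * (p * s ^ (p - 1) * u + u ^ p) - (s + u) ^ p
  have hderiv (u : ℝ) : HasDerivAt gap
      (p * (2 ^ (p - 2) * (s ^ (p - 1) + u ^ (p - 1)) - (s + u) ^ (p - 1))) u := by
    have hpow : HasDerivAt (fun u => (s + u) ^ p) (p * (s + u) ^ (p - 1)) u :=
      (Real.hasDerivAt_rpow_const (.inr hp_one)).comp_const_add s u
    have hbound := (((hasDerivAt_id u).const_mul (p * s ^ (p - 1))).add
      (Real.hasDerivAt_rpow_const (.inr hp_one))).const_mul (2 ^ (p - 2))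
    exact (hbound.sub hpow).congr_deriv (by ring)
  have hmono : MonotoneOn gap (Ici 0) := by
    refine monotoneOn_of_hasDerivWithinAt_nonneg (convex_Ici 0)
      (fun u _ => (hderiv u).continuousAt.continuousWithinAt)
      (fun u _ => (hderiv u).hasDerivWithinAt) fun u hu => ?_
    have hu₀ : 0 ≤ u := interior_subset hu
    have hmean := add_rpow_le_two_rpow_mul_rpow_add_rpow (q := p - 1) hs hu₀
      (hp.imp (by rintro rfl; norm_num) (by intro; linarith))
    rw [show p - 1 - 1 = p - 2 by ring] at hmean
    exact mul_nonneg (by linarith) (sub_nonneg.2 hmean)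
  have hgap_zero : gap 0 = -s ^ p := by
    simp [gap, Real.zero_rpow (by linarith : p ≠ 0)]
  have hgap : gap 0 ≤ gap t := hmono self_mem_Ici ht ht
  rw [hgap_zero] at hgap
  dsimp only [gap] at hgap
  linarith

end RpowIncrement

theorem gradient_of_power_of_norm_lipschitz_type_bound_general
    {E : Type*} [SeminormedAddCommGroup E] [NormedSpace ℝ E]
    (x₀ : E) {p : ℝ} (hp : p = 1 ∨ 2 ≤ p) (v z : E) {ξ : ℝ} (h : ‖v - z‖ ≤ ξ) :
    ‖‖v - x₀‖ ^ (p - 1) • (v - x₀) - ‖z - x₀‖ ^ (p - 1) • (z - x₀)‖ ≤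
      p * 2 ^ (p - 2) * ‖z - x₀‖ ^ (p - 1) * ξ + 2 ^ (p - 2) * ξ ^ p := by
  have hp_one : 1 ≤ p := by rcases hp with rfl | hp <;> linarith
  have hξ : 0 ≤ ξ := (norm_nonneg _).trans h
  calc ‖‖v - x₀‖ ^ (p - 1) • (v - x₀) - ‖z - x₀‖ ^ (p - 1) • (z - x₀)‖
      ≤ (‖z - x₀‖ + ξ) ^ p - ‖z - x₀‖ ^ p :=
        norm_rpow_smul_sub_rpow_smul_le hp_one (by rwa [sub_sub_sub_cancel_right])
    _ ≤ 2 ^ (p - 2) * (p * ‖z - x₀‖ ^ (p - 1) * ξ + ξ ^ p) :=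
        add_rpow_sub_rpow_le (norm_nonneg _) hξ hp
    _ = p * 2 ^ (p - 2) * ‖z - x₀‖ ^ (p - 1) * ξ + 2 ^ (p - 2) * ξ ^ p := by ring

/-- For `d(x) = ‖x - x₀‖^{p+1}/(p+1)` with gradient `∇d(x) = ‖x - x₀‖^{p-1}(x - x₀)`:
for all `v, z` and any `ξ ≥ ‖v - z‖`,
`‖∇d(v) - ∇d(z)‖ ≤ p 2^{p-2} ‖z - x₀‖^{p-1} ξ + 2^{p-2} ξ^p`
(`2^{p-2}` is a real power). -/
theorem gradient_of_power_of_norm_lipschitz_type_bound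
    {E : Type*} [NormedAddCommGroup E] [InnerProductSpace ℝ E] [FiniteDimensional ℝ E]
    (x₀ : E) (p : ℕ) (hp : 1 ≤ p) :
    ∀ v z : E, ∀ ξ : ℝ, ‖v - z‖ ≤ ξ →
      ‖(‖v - x₀‖ ^ (p - 1)) • (v - x₀) - (‖z - x₀‖ ^ (p - 1)) • (z - x₀)‖ ≤
        (p : ℝ) * (2 : ℝ) ^ ((p : ℝ) - 2) * ‖z - x₀‖ ^ (p - 1) * ξ
          + (2 : ℝ) ^ ((p : ℝ) - 2) * ξ ^ p := by
  intro v z ξ h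
  have hp_cases : (p : ℝ) = 1 ∨ 2 ≤ (p : ℝ) := by
    exact_mod_cast (hp.eq_or_lt.imp Eq.symm id : p = 1 ∨ 2 ≤ p)
  simpa only [← Nat.cast_pred hp, Real.rpow_natCast] using
    gradient_of_power_of_norm_lipschitz_type_bound_general x₀ hp_cases v z h
end

section
/- For an integer n ≥ 1 and integer p ≥ 1, define f : ℝ^n → ℝ by f(x) = |x^{(1)}|^{p+1} + Σ_{i=2}^n |x^{(i)} − 2x^{(i−1)}|^{p+1}, where x^{(i)} denotes the i-th coordinate of x. Then f attains its minimum 0 at the origin x* = 0; the points x_0 = (1, 1, ..., 1) and x_1 with x_1^{(i)} = 2^i − 1 satisfy f(x_0) = f(x_1) = n; and in the standard Euclidean norm, ‖x_0 − x*‖ = √n while ‖x_1 − x*‖ ≥ 2^{n−1}. Consequently, the radius D = sup{‖x − x*‖ : f(x) ≤ f(x_0)} of the initial level set satisfies D ≥ 2^{n−1}. -/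
/-!
The function sums the powers `|rᵢ|ᵖ⁺¹` of the residuals `rᵢ = xᵢ - 2 xᵢ₋₁` of a linear recurrence.
Only their absolute values enter, so every point all of whose residuals are `±1` has value `n`. The
residuals `1, -1, -1, …` keep all coordinates equal to `1`, whereas the residuals `1, 1, 1, …`
accumulate to the geometric sums `1 + 2 + ⋯ + 2ⁱ = 2ⁱ⁺¹ - 1` (indices starting at `0`).
-/

section ChainResidual

variable {R : Type*} {n : ℕ}

/-- The defect of `x` in the recurrence `xᵢ = a * xᵢ₋₁`, with the convention `x₋₁ = 0`: it is the
expression inside the `i`-th absolute value of the objective function. The first index is split off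
because `i - 1` truncates to `0` there. -/
def chainResidual [Ring R] (a : R) (x : Fin n → R) (i : Fin n) : R :=
  if (i : ℕ) = 0 then x i
  else x i - a * x ⟨(i : ℕ) - 1, Nat.lt_of_le_of_lt (Nat.sub_le _ 1) i.isLt⟩

theorem chainResidual_zero [Ring R] (a : R) (i : Fin n) : chainResidual a 0 i = 0 := by
  simp [chainResidual]

theorem chainResidual_geom_sum [Ring R] (a : R) (i : Fin n) :
    chainResidual a (fun j : Fin n => ∑ k ∈ Finset.range ((j : ℕ) + 1), a ^ k) i = 1 := by
  rcases i with ⟨_ | m, hm⟩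
  · simp [chainResidual]
  · simp [chainResidual, geom_sum_succ (n := m + 1)]

theorem abs_chainResidual_two_one [Ring R] [LinearOrder R] [IsOrderedRing R] (i : Fin n) :
    |chainResidual (2 : R) 1 i| = 1 := by
  have one_sub_two : (1 : R) - 2 = -1 := by norm_num
  by_cases hi : (i : ℕ) = 0 <;> simp [chainResidual, hi, one_sub_two]

end ChainResidual

section ChainPowerSum

variable {R : Type*} [Ring R] [LinearOrder R] {n : ℕ}

/-- The sum of the `q`-th powers of the absolute chain residuals; the objective function of the
theorem is the case `a = 2`, `q = p + 1`. -/
def chainPowerSum (a : R) (q : ℕ) (x : Fin n → R) : R :=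
  ∑ i, |chainResidual a x i| ^ q

theorem chainPowerSum_eq_sum_ite (a : R) (q : ℕ) (x : Fin n → R) :
    chainPowerSum a q x = ∑ i : Fin n,
      if (i : ℕ) = 0 then |x i| ^ q
      else |x i - a * x ⟨(i : ℕ) - 1, Nat.lt_of_le_of_lt (Nat.sub_le _ 1) i.isLt⟩| ^ q :=
  Finset.sum_congr rfl fun _ _ => apply_ite (fun r : R => |r| ^ q) _ _ _

theorem chainPowerSum_eq_of_abs_chainResidual_eq_one {a : R} (q : ℕ) {x : Fin n → R}
    (hx : ∀ i, |chainResidual a x i| = 1) : chainPowerSum a q x = n := by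
  simp [chainPowerSum, hx]

variable [IsOrderedRing R]

theorem chainPowerSum_zero (a : R) {q : ℕ} (hq : q ≠ 0) :
    chainPowerSum a q (0 : Fin n → R) = 0 := by
  simp [chainPowerSum, chainResidual_zero, hq]

theorem chainPowerSum_nonneg (a : R) (q : ℕ) (x : Fin n → R) : 0 ≤ chainPowerSum a q x :=
  Finset.sum_nonneg fun _ _ => pow_nonneg (abs_nonneg _) q

theorem chainPowerSum_two_one (q : ℕ) : chainPowerSum (2 : R) q (1 : Fin n → R) = n :=
  chainPowerSum_eq_of_abs_chainResidual_eq_one q abs_chainResidual_two_one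

theorem chainPowerSum_geom_sum (a : R) (q : ℕ) :
    chainPowerSum a q (fun j : Fin n => ∑ k ∈ Finset.range ((j : ℕ) + 1), a ^ k) = n :=
  chainPowerSum_eq_of_abs_chainResidual_eq_one q fun i => by
    rw [chainResidual_geom_sum, abs_one]

end ChainPowerSum

theorem pow_le_norm_of_apply_eq_geom_sum {ι : Type*} [Fintype ι] {q : ENNReal} [Fact (1 ≤ q)]
    {a : ℝ} (ha : 0 ≤ a) {x : PiLp q fun _ : ι => ℝ} {i : ι} {m : ℕ}
    (hx : x i = ∑ k ∈ Finset.range (m + 1), a ^ k) : a ^ m ≤ ‖x‖ :=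
  calc
    a ^ m ≤ ∑ k ∈ Finset.range (m + 1), a ^ k :=
      Finset.single_le_sum (fun k _ => pow_nonneg ha k) (Finset.self_mem_range_succ m)
    _ = x i := hx.symm
    _ ≤ ‖x i‖ := Real.le_norm_self _
    _ ≤ ‖x‖ := PiLp.norm_apply_le x i

/-- Example 3.1: for `f(x) = |x^{(1)}|^{p+1} + Σ_{i=2}^n |x^{(i)} - 2x^{(i-1)}|^{p+1}` on
`ℝⁿ` (0-indexed coordinates), `f` attains its minimum `0` at the origin; the points
`x₀ = (1,…,1)` and `x₁` with `x₁^{(i)} = 2^i - 1` satisfy `f(x₀) = f(x₁) = n`,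
`‖x₀‖ = √n`, `‖x₁‖ ≥ 2^{n-1}`; hence the radius `D` of the initial level set
`{x : f(x) ≤ f(x₀)}` satisfies `D ≥ 2^{n-1}`. -/
theorem level_set_radius_can_be_exponentially_large (n : ℕ) (hn : 1 ≤ n)
    (p : ℕ) (hp : 1 ≤ p)
    (f : EuclideanSpace ℝ (Fin n) → ℝ)
    (hf : ∀ x : EuclideanSpace ℝ (Fin n),
      f x = ∑ i : Fin n,
        if (i : ℕ) = 0 then |x i| ^ (p + 1)
        else |x i - 2 * x ⟨(i : ℕ) - 1, Nat.lt_of_le_of_lt (Nat.sub_le _ 1) i.isLt⟩| ^ (p + 1)) :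
    (f 0 = 0 ∧ ∀ x, f 0 ≤ f x) ∧
    ∀ x₀ x₁ : EuclideanSpace ℝ (Fin n),
      (∀ i : Fin n, x₀ i = 1) → (∀ i : Fin n, x₁ i = 2 ^ ((i : ℕ) + 1) - 1) →
      f x₀ = n ∧ f x₁ = n ∧
      ‖x₀ - 0‖ = Real.sqrt n ∧ (2 : ℝ) ^ (n - 1) ≤ ‖x₁ - 0‖ ∧
      ∀ D : ℝ, (∀ z : EuclideanSpace ℝ (Fin n), f z ≤ f x₀ → ‖z - 0‖ ≤ D) →
        (2 : ℝ) ^ (n - 1) ≤ D := by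
  have f_eq (x : EuclideanSpace ℝ (Fin n)) : f x = chainPowerSum 2 (p + 1) x :=
    (hf x).trans (chainPowerSum_eq_sum_ite 2 (p + 1) x).symm
  have f_zero : f 0 = 0 := (f_eq 0).trans (chainPowerSum_zero 2 p.succ_ne_zero)
  refine ⟨⟨f_zero, fun x => ?_⟩, fun x₀ x₁ h₀ h₁ => ?_⟩
  · simpa only [f_zero, f_eq x] using chainPowerSum_nonneg 2 (p + 1) x
  have x₁_eq (i : Fin n) : x₁ i = ∑ k ∈ Finset.range ((i : ℕ) + 1), (2 : ℝ) ^ k := by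
    rw [h₁, ← geom_sum_mul]
    norm_num
  have f_x₀ : f x₀ = n := by
    rw [f_eq, show ⇑x₀ = 1 from funext h₀, chainPowerSum_two_one]
  have f_x₁ : f x₁ = n := by
    rw [f_eq, funext x₁_eq, chainPowerSum_geom_sum]
  have norm_x₀ : ‖x₀ - 0‖ = √n := by
    simp [EuclideanSpace.norm_eq, h₀]
  have norm_x₁ : (2 : ℝ) ^ (n - 1) ≤ ‖x₁ - 0‖ := by
    rw [sub_zero]
    exact pow_le_norm_of_apply_eq_geom_sum zero_le_two (x₁_eq ⟨n - 1, Nat.sub_one_lt_of_lt hn⟩)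
  exact ⟨f_x₀, f_x₁, norm_x₀, norm_x₁,
    fun D hD => norm_x₁.trans (hD x₁ (f_x₁.trans f_x₀.symm).le)⟩
end
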